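/- arXiv:2203.02663 — 6 statements merged into one kernel-verified Lean document; each statement's English description precedes it below -/
import Mathlib

section
/- (Theorem 2.1(a), transformation part.) Let q, r : ℝ → ℂ with q continuous, r continuously differentiable, and q·r Lebesgue integrable on every interval (−∞, x]. Define E(x) := exp((i/2)∫_{−∞}^x q(t)r(t) dt), u(x) := q(x)·E(x)^{−2}, and v(x) := (−(i/2)r'(x) + (1/4)q(x)r(x)²)·E(x)². Let ζ ∈ ℂ and λ := ζ². If (ξ, η) : ℝ → ℂ² is a differentiable pair satisfying the AKNS system ξ'(x) = −iλ·ξ(x) + u(x)·η(x), η'(x) = v(x)·ξ(x) + iλ·η(x) for all x, then the pair α(x) := ζ·E(x)·ξ(x), β(x) := (i/2)·r(x)·E(x)·ξ(x) + E(x)^{−1}·η(x) is a solution of system (1.1) with potentials q, r and spectral parameter ζ. -/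
open MeasureTheory

/-- The quantity E(x) = exp((i/2)∫_{-∞}^x q r) from (2.18). -/
noncomputable def Epot (q r : ℝ → ℂ) (x : ℝ) : ℂ :=
  Complex.exp ((Complex.I / 2) * ∫ t in Set.Iic x, q t * r t)

theorem Epot_hasDerivAt (q r : ℝ → ℂ) (hc : Continuous (fun t => q t * r t))
    (hqr : ∀ x : ℝ, IntegrableOn (fun t => q t * r t) (Set.Iic x)) (x : ℝ) :
    HasDerivAt (Epot q r) (Complex.I / 2 * (q x * r x) * Epot q r x) x := by
  have h1 : HasDerivAt (fun y => ∫ t in (0:ℝ)..y, q t * r t) (q x * r x) x :=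
    hc.integral_hasStrictDerivAt 0 x |>.hasDerivAt
  have h2 : (fun y => ∫ t in Set.Iic y, q t * r t)
      = fun y => (∫ t in (0:ℝ)..y, q t * r t) + ∫ t in Set.Iic (0:ℝ), q t * r t := by
    funext y
    rw [← intervalIntegral.integral_Iic_sub_Iic (hqr 0) (hqr y)]
    ring
  have h3 : HasDerivAt (fun y => ∫ t in Set.Iic y, q t * r t) (q x * r x) x := by
    rw [h2]
    exact h1.add_const _
  have h4 := (h3.const_mul (Complex.I / 2)).cexp
  refine HasDerivAt.congr_deriv h4 ?_
  unfold Epot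
  ring

/-- Theorem 2.1(a), transformation part: a solution (ξ,η) of the AKNS system (1.7)
with potentials u = q E⁻², v = (-(i/2)r' + (1/4)q r²) E² is transformed into a
solution of system (1.1) via α = ζ E ξ, β = (i/2) r E ξ + E⁻¹ η. -/
theorem akns_uv_to_system11
    (q r r' : ℝ → ℂ)
    (hq : Continuous q)
    (hr : ∀ x : ℝ, HasDerivAt r (r' x) x)
    (hr' : Continuous r')
    (hqr : ∀ x : ℝ, IntegrableOn (fun t => q t * r t) (Set.Iic x))
    (ζ : ℂ) (ξ η : ℝ → ℂ)
    (hξ : ∀ x : ℝ, HasDerivAt ξ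
      (-Complex.I * ζ ^ 2 * ξ x + (q x / (Epot q r x) ^ 2) * η x) x)
    (hη : ∀ x : ℝ, HasDerivAt η
      (((-(Complex.I / 2) * r' x + (1 / 4) * q x * (r x) ^ 2) * (Epot q r x) ^ 2) * ξ x
        + Complex.I * ζ ^ 2 * η x) x) :
    ∀ x : ℝ,
      HasDerivAt (fun x => ζ * Epot q r x * ξ x)
        (-Complex.I * ζ ^ 2 * (ζ * Epot q r x * ξ x)
          + ζ * q x * ((Complex.I / 2) * r x * Epot q r x * ξ x + (Epot q r x)⁻¹ * η x)) x ∧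
      HasDerivAt (fun x => (Complex.I / 2) * r x * Epot q r x * ξ x + (Epot q r x)⁻¹ * η x)
        (ζ * r x * (ζ * Epot q r x * ξ x)
          + Complex.I * ζ ^ 2
            * ((Complex.I / 2) * r x * Epot q r x * ξ x + (Epot q r x)⁻¹ * η x)) x := by
  intro x
  have hc : Continuous (fun t => q t * r t) :=
    hq.mul (continuous_iff_continuousAt.2 fun y => (hr y).continuousAt)
  have hE := Epot_hasDerivAt q r hc hqr x
  have hne : Epot q r x ≠ 0 := Complex.exp_ne_zero _
  constructor
  · refine HasDerivAt.congr_deriv ((hE.const_mul ζ).mul (hξ x)) ?_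
    field_simp
    ring
  · refine HasDerivAt.congr_deriv
      (((((hr x).const_mul (Complex.I / 2)).mul hE).mul (hξ x)).add ((hE.inv hne).mul (hη x))) ?_
    simp only [Pi.mul_apply, Pi.inv_apply]
    field_simp
    ring_nf
    simp only [Complex.I_sq]
    ring
end

section
/- (Uncoupling of the Marchenko system.) Let Ω, Ω̄ : ℝ → ℂ be differentiable with derivatives Ω', Ω̄', and let K₁, K₂, K̄₁, K̄₂ : ℝ × ℝ → ℂ. Fix x < y and assume: (i) K̄₁(x, z) = i∫_x^∞ K₁(x, s)·Ω'(s + z) ds and K₂(x, z) = −i∫_x^∞ K̄₂(x, s)·Ω̄'(s + z) ds for all z > x; (ii) K₁(x, y) + Ω̄(x + y) + i∫_x^∞∫_x^∞ K₁(x, z)·Ω'(z + s)·Ω̄(s + y) ds dz = 0 and K̄₂(x, y) + Ω(x + y) − i∫_x^∞∫_x^∞ K̄₂(x, z)·Ω̄'(z + s)·Ω(s + y) ds dz = 0; (iii) the functions (z, s) ↦ K₁(x, z)·Ω'(z + s)·Ω̄(s + y) and (z, s) ↦ K̄₂(x, z)·Ω̄'(z + s)·Ω(s + y) are Lebesgue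 integrable on (x, ∞) × (x, ∞). Then the remaining two equations of the coupled Marchenko system (4.40) hold at (x, y): K₁(x, y) + Ω̄(x + y) + ∫_x^∞ K̄₁(x, z)·Ω̄(z + y) dz = 0 and K̄₂(x, y) + Ω(x + y) + ∫_x^∞ K₂(x, z)·Ω(z + y) dz = 0. -/
open MeasureTheory

/-- Uncoupling of the Marchenko system (4.40): the auxiliary relations together with
the two uncoupled equations imply the remaining two coupled equations. -/
theorem marchenko_uncoupling
    (Ω Ωb Ω' Ωb' : ℝ → ℂ)
    (hΩ : ∀ t : ℝ, HasDerivAt Ω (Ω' t) t)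
    (hΩb : ∀ t : ℝ, HasDerivAt Ωb (Ωb' t) t)
    (K₁ K₂ Kb₁ Kb₂ : ℝ × ℝ → ℂ)
    (x y : ℝ) (hxy : x < y)
    (haux₁ : ∀ z : ℝ, x < z →
      Kb₁ (x, z) = Complex.I * ∫ s in Set.Ioi x, K₁ (x, s) * Ω' (s + z))
    (haux₂ : ∀ z : ℝ, x < z →
      K₂ (x, z) = -Complex.I * ∫ s in Set.Ioi x, Kb₂ (x, s) * Ωb' (s + z))
    (huncoup₁ : K₁ (x, y) + Ωb (x + y)
      + Complex.I * ∫ z in Set.Ioi x, ∫ s in Set.Ioi x,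
          K₁ (x, z) * Ω' (z + s) * Ωb (s + y) = 0)
    (huncoup₂ : Kb₂ (x, y) + Ω (x + y)
      - Complex.I * ∫ z in Set.Ioi x, ∫ s in Set.Ioi x,
          Kb₂ (x, z) * Ωb' (z + s) * Ω (s + y) = 0)
    (hint₁ : IntegrableOn
      (fun p : ℝ × ℝ => K₁ (x, p.1) * Ω' (p.1 + p.2) * Ωb (p.2 + y))
      (Set.Ioi x ×ˢ Set.Ioi x))
    (hint₂ : IntegrableOn
      (fun p : ℝ × ℝ => Kb₂ (x, p.1) * Ωb' (p.1 + p.2) * Ω (p.2 + y))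
      (Set.Ioi x ×ˢ Set.Ioi x)) :
    K₁ (x, y) + Ωb (x + y) + (∫ z in Set.Ioi x, Kb₁ (x, z) * Ωb (z + y)) = 0 ∧
    Kb₂ (x, y) + Ω (x + y) + (∫ z in Set.Ioi x, K₂ (x, z) * Ω (z + y)) = 0 := by
  have key : ∀ (c : ℂ) (A B W F : ℝ → ℂ),
      (∀ z : ℝ, x < z → B z = c * ∫ s in Set.Ioi x, A s * W (s + z)) →
      IntegrableOn (fun p : ℝ × ℝ => A p.1 * W (p.1 + p.2) * F (p.2 + y))
        (Set.Ioi x ×ˢ Set.Ioi x) →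
      (∫ z in Set.Ioi x, B z * F (z + y)) =
        c * ∫ z in Set.Ioi x, ∫ s in Set.Ioi x, A z * W (z + s) * F (s + y) := by
    intro c A B W F hB hi
    have hi' : Integrable (Function.uncurry
        (fun z s : ℝ => A z * W (z + s) * F (s + y)))
        ((volume.restrict (Set.Ioi x)).prod (volume.restrict (Set.Ioi x))) := by
      rw [Measure.prod_restrict]
      exact hi
    rw [integral_integral_swap hi', ← integral_const_mul]
    refine setIntegral_congr_fun measurableSet_Ioi ?_
    intro z hz
    simp only
    rw [hB z hz, integral_mul_const, mul_assoc]
  constructor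
  · rw [key Complex.I (fun s => K₁ (x, s)) (fun s => Kb₁ (x, s)) Ω' Ωb haux₁ hint₁]
    exact huncoup₁
  · rw [key (-Complex.I) (fun s => Kb₂ (x, s)) (fun s => K₂ (x, s)) Ωb' Ω haux₂ hint₂,
      neg_mul, ← sub_eq_add_neg]
    exact huncoup₂
end

section
/- (Theorem 5.1, first Marchenko equation.) With the matrix triplet data (A, B, C), (Ā, B̄, C̄) and M, M̄, Γ̄(x), Ω, Ω̄, Ω' as in the context, fix x ∈ ℝ and assume Γ̄(x) is invertible. Define K₁(x, y) := −C̄·e^{−iĀx}·Γ̄(x)^{−1}·e^{−iĀy}·B̄ for y ≥ x. Then for every y > x the reflectionless Marchenko equation holds: K₁(x, y) + Ω̄(x + y) + i·∫_x^∞∫_x^∞ K₁(x, z)·Ω'(z + s)·Ω̄(s + y) ds dz = 0. -/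
open MeasureTheory Matrix

/-- e^{iAt} for a complex square matrix A and real t. -/
noncomputable def eiA {n : ℕ} (A : Matrix (Fin n) (Fin n) ℂ) (t : ℝ) :
    Matrix (Fin n) (Fin n) ℂ :=
  NormedSpace.exp ((Complex.I * t) • A)

section Decay
open scoped Matrix.Norms.Operator
open Filter Topology

lemma exp_mulVec_eig {n : ℕ} (X : Matrix (Fin n) (Fin n) ℂ) (l : ℂ) (v : Fin n → ℂ)
    (h : X *ᵥ v = l • v) : NormedSpace.exp X *ᵥ v = Complex.exp l • v := by
  have hs := NormedSpace.exp_series_hasSum_exp' (𝕂 := ℂ) X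
  have hl := NormedSpace.exp_series_hasSum_exp' (𝕂 := ℂ) l
  have hpow : ∀ k : ℕ, X ^ k *ᵥ v = l ^ k • v := by
    intro k
    induction k with
    | zero => simp
    | succ k ih =>
      rw [pow_succ, ← Matrix.mulVec_mulVec, h, Matrix.mulVec_smul, ih, smul_smul, pow_succ, mul_comm]
  let L : Matrix (Fin n) (Fin n) ℂ →+ (Fin n → ℂ) :=
    { toFun := fun Y => Y *ᵥ v, map_zero' := by simp, map_add' := fun a b => Matrix.add_mulVec a b v }
  have hLc : Continuous L := by
    show Continuous (fun Y : Matrix (Fin n) (Fin n) ℂ => Y *ᵥ v)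
    exact Continuous.matrix_mulVec continuous_id continuous_const
  have h1 := hs.map L hLc
  have h2 := hl.smul_const v
  rw [← Complex.exp_eq_exp_ℂ] at h2
  refine h1.unique ?_
  convert h2 using 2 with k
  show ((k.factorial : ℂ)⁻¹ • X ^ k) *ᵥ v = _
  rw [Matrix.smul_mulVec, hpow, smul_smul, smul_eq_mul]

lemma spectrum_exp_sub {n : ℕ} (X : Matrix (Fin n) (Fin n) ℂ) (m : ℂ)
    (hm : m ∈ spectrum ℂ (NormedSpace.exp X)) :
    ∃ l ∈ spectrum ℂ X, m = Complex.exp l := by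
  have hm' : Module.End.HasEigenvalue (Matrix.toLin' (NormedSpace.exp X)) m := by
    rw [Module.End.hasEigenvalue_iff_mem_spectrum, Matrix.spectrum_toLin']; exact hm
  have hcomm : Commute (Matrix.toLin' (NormedSpace.exp X)) (Matrix.toLin' X) := by
    have : Commute (NormedSpace.exp X) X := (Commute.refl X).exp_left
    show _ * _ = _ * _
    rw [Module.End.mul_eq_comp, Module.End.mul_eq_comp, ← Matrix.toLin'_mul, ← Matrix.toLin'_mul, this.eq]
  set W := Module.End.eigenspace (Matrix.toLin' (NormedSpace.exp X)) m with hW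
  have hmap : ∀ w ∈ W, Matrix.toLin' X w ∈ W :=
    Module.End.mapsTo_genEigenspace_of_comm hcomm m 1
  have : Nontrivial W := Submodule.nontrivial_iff_ne_bot.mpr hm'
  obtain ⟨l, hl⟩ := Module.End.exists_eigenvalue ((Matrix.toLin' X).restrict hmap)
  obtain ⟨w, hw⟩ := hl.exists_hasEigenvector
  have hw1 := hw.apply_eq_smul
  have hw0 : (w : Fin n → ℂ) ≠ 0 := fun h => hw.2 (Subtype.ext h)
  have hX : X *ᵥ (w : Fin n → ℂ) = l • (w : Fin n → ℂ) := by
    have := congrArg Subtype.val hw1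
    simpa using this
  have hE : NormedSpace.exp X *ᵥ (w : Fin n → ℂ) = m • (w : Fin n → ℂ) := by
    have := Module.End.mem_eigenspace_iff.mp w.2
    simpa using this
  refine ⟨l, ?_, ?_⟩
  · rw [← Matrix.spectrum_toLin', ← Module.End.hasEigenvalue_iff_mem_spectrum]
    exact Module.End.hasEigenvalue_of_hasEigenvector
      (x := (w : Fin n → ℂ)) ⟨Module.End.mem_eigenspace_iff.mpr (by simpa using hX), hw0⟩
  · rw [exp_mulVec_eig X l _ hX] at hE
    exact (smul_left_injective ℂ hw0 hE).symm

lemma eiA_add {n : ℕ} (A : Matrix (Fin n) (Fin n) ℂ) (s t : ℝ) :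
    eiA A (s + t) = eiA A s * eiA A t := by
  unfold eiA
  rw [← Matrix.exp_add_of_commute, ← add_smul]
  · congr 2; push_cast; ring
  · exact ((Commute.refl A).smul_left _).smul_right _

lemma eiA_zero {n : ℕ} (A : Matrix (Fin n) (Fin n) ℂ) : eiA A 0 = 1 := by
  simp [eiA]

lemma eiA_nat {n : ℕ} (A : Matrix (Fin n) (Fin n) ℂ) (k : ℕ) :
    eiA A k = eiA A 1 ^ k := by
  induction k with
  | zero => simp [eiA_zero]
  | succ k ih => rw [Nat.cast_succ, eiA_add, ih, pow_succ]

lemma eiA_continuous {n : ℕ} (A : Matrix (Fin n) (Fin n) ℂ) : Continuous (eiA A) := by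
  unfold eiA
  exact NormedSpace.exp_continuous.comp (by fun_prop)

lemma eiA_neg {n : ℕ} (A : Matrix (Fin n) (Fin n) ℂ) (t : ℝ) : eiA A (-t) = eiA (-A) t := by
  simp [eiA]

lemma eiA_decay {n : ℕ} (A : Matrix (Fin n) (Fin n) ℂ) (hA : ∀ μ ∈ spectrum ℂ A, 0 < μ.im) :
    ∃ b : ℝ, 0 < b ∧ ∀ i j, (fun t => eiA A t i j) =O[atTop] fun t => Real.exp (-b * t) := by
  rcases Nat.eq_zero_or_pos n with rfl | hn
  · exact ⟨1, one_pos, fun i => i.elim0⟩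
  have : NeZero n := ⟨hn.ne'⟩
  have hsr : spectralRadius ℂ (eiA A 1) < (1 : NNReal) := by
    apply spectrum.spectralRadius_lt_of_forall_lt
    intro m hm
    obtain ⟨l, hl, rfl⟩ := spectrum_exp_sub _ _ hm
    have hu : (Complex.I * ((1 : ℝ) : ℂ)) = Complex.I := by simp
    rw [hu] at hl
    have hl2 : Complex.I • ((-Complex.I) * l) ∈ spectrum ℂ (Complex.I • A) := by
      convert hl using 1
      simp [← mul_assoc]
    have h3 : -Complex.I * l ∈ spectrum ℂ A := by
      have := (spectrum.smul_mem_smul_iff (a := A) (s := -Complex.I * l)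
        (r := Units.mk0 Complex.I Complex.I_ne_zero)).mp hl2
      exact this
    have := hA _ h3
    rw [← NNReal.coe_lt_coe]
    simp only [coe_nnnorm, Complex.norm_exp, NNReal.coe_one, Real.exp_lt_one_iff]
    simpa using this
  obtain ⟨r, hr1, hr2⟩ := ENNReal.lt_iff_exists_nnreal_btwn.mp hsr
  have hr2' : (r : ℝ) < 1 := by exact_mod_cast hr2
  have hr0 : (0 : ℝ) < r := by
    have : (0 : ENNReal) < r := lt_of_le_of_lt (bot_le) hr1
    exact_mod_cast this
  have hG := (spectrum.pow_nnnorm_pow_one_div_tendsto_nhds_spectralRadius (eiA A 1)).eventually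
    (gt_mem_nhds hr1)
  have hG2 : ∀ᶠ k : ℕ in atTop, ‖eiA A 1 ^ k‖ ≤ (r : ℝ) ^ k := by
    filter_upwards [hG, eventually_gt_atTop 0] with k hk hk0
    have hk0' : (0 : ℝ) < k := by exact_mod_cast hk0
    have h1 := ENNReal.rpow_le_rpow hk.le hk0'.le
    rw [← ENNReal.rpow_mul, one_div, inv_mul_cancel₀ hk0'.ne', ENNReal.rpow_one,
      ENNReal.rpow_natCast] at h1
    exact_mod_cast h1
  obtain ⟨K, hK⟩ := (isCompact_Icc (a := (0 : ℝ)) (b := 1)).exists_bound_of_continuousOn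
    (eiA_continuous A).continuousOn
  have hK0 : 0 ≤ K := (norm_nonneg _).trans (hK 0 (by simp))
  refine ⟨-Real.log r, by simpa using Real.log_neg hr0 hr2', fun i j => ?_⟩
  refine Asymptotics.IsBigO.of_bound (K * (r : ℝ)⁻¹) ?_
  filter_upwards [tendsto_nat_floor_atTop.eventually hG2, eventually_ge_atTop 0] with t ht ht0
  have e1 : eiA A t = eiA A (t - ⌊t⌋₊) * eiA A 1 ^ ⌊t⌋₊ := by
    rw [← eiA_nat, ← eiA_add]; congr 1; ring
  have f1 := Nat.floor_le ht0
  have f2 := Nat.lt_floor_add_one t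
  have e2 : ‖eiA A t‖ ≤ K * (r : ℝ) ^ ⌊t⌋₊ := by
    rw [e1]
    exact (norm_mul_le _ _).trans (mul_le_mul (hK _ ⟨by linarith, by linarith⟩) ht
      (norm_nonneg _) hK0)
  have e3 : ‖eiA A t i j‖ ≤ ‖eiA A t‖ := by
    rw [Matrix.linfty_opNorm_def]
    have a1 : ‖eiA A t i j‖₊ ≤ ∑ j', ‖eiA A t i j'‖₊ :=
      Finset.single_le_sum (f := fun j' => ‖eiA A t i j'‖₊) (fun _ _ => bot_le) (Finset.mem_univ j)
    have a2 := Finset.le_sup (f := fun i' => ∑ j', ‖eiA A t i' j'‖₊) (Finset.mem_univ i)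
    exact_mod_cast a1.trans a2
  have e4 : (r : ℝ) ^ ⌊t⌋₊ ≤ (r : ℝ)⁻¹ * Real.exp (-(-Real.log r) * t) := by
    rw [neg_neg, ← Real.rpow_def_of_pos hr0, ← Real.rpow_natCast, ← Real.rpow_neg_one,
      ← Real.rpow_add hr0]
    exact Real.rpow_le_rpow_of_exponent_ge hr0 hr2'.le (by linarith)
  rw [Real.norm_of_nonneg (Real.exp_pos _).le, mul_assoc]
  exact e3.trans (e2.trans (mul_le_mul_of_nonneg_left e4 hK0))

end Decay

lemma F_integrable {n m : ℕ} (A : Matrix (Fin n) (Fin n) ℂ) (hA : ∀ μ ∈ spectrum ℂ A, 0 < μ.im)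
    (D : Matrix (Fin m) (Fin m) ℂ) (hD : ∀ μ ∈ spectrum ℂ D, 0 < μ.im)
    (Q : Matrix (Fin n) (Fin m) ℂ) (x : ℝ) (i : Fin n) (j : Fin m) :
    IntegrableOn (fun z => (eiA A z * Q * eiA D z) i j) (Set.Ioi x) := by
  obtain ⟨b, hb, hbO⟩ := eiA_decay A hA
  obtain ⟨c, hc, hcO⟩ := eiA_decay D hD
  have hcont : Continuous (fun z => (eiA A z * Q * eiA D z) i j) := by
    have h1 := eiA_continuous A
    have h2 := eiA_continuous D
    exact ((h1.matrix_mul continuous_const).matrix_mul h2).matrix_elem i j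
  refine (integrable_norm_iff hcont.aestronglyMeasurable).mp ?_
  refine integrable_of_isBigO_exp_neg (b := b + c) (by positivity) hcont.norm.continuousOn ?_
  refine Asymptotics.IsBigO.norm_left ?_
  simp only [Matrix.mul_apply, Finset.sum_mul]
  refine Asymptotics.IsBigO.fun_sum fun k _ => Asymptotics.IsBigO.fun_sum fun l _ => ?_
  have := ((hbO i l).mul (hcO k j)).const_mul_left (Q l k)
  refine (this.congr (fun t => ?_) (fun t => ?_))
  · ring
  · rw [← Real.exp_add]; congr 1; ring

lemma integral_sandwich {p q n m : ℕ} (S : Set ℝ) (G : ℝ → Matrix (Fin n) (Fin m) ℂ)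
    (hG : ∀ i j, IntegrableOn (fun z => G z i j) S) (J : Matrix (Fin n) (Fin m) ℂ)
    (hJ : ∀ i j, J i j = ∫ z in S, G z i j)
    (P : Matrix (Fin p) (Fin n) ℂ) (R : Matrix (Fin m) (Fin q) ℂ) (i : Fin p) (j : Fin q) :
    ∫ z in S, (P * G z * R) i j = (P * J * R) i j := by
  simp only [Matrix.mul_apply, Finset.sum_mul]
  rw [integral_finsetSum]
  · refine Finset.sum_congr rfl fun k _ => ?_
    rw [integral_finsetSum]
    · refine Finset.sum_congr rfl fun l _ => ?_
      rw [integral_mul_const, integral_const_mul, hJ]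
    · intro l _
      exact ((hG l k).const_mul _).mul_const _
  · intro k _
    exact integrable_finsetSum _ fun l _ => ((hG l k).const_mul _).mul_const _

lemma integral_shift {n m : ℕ} (A : Matrix (Fin n) (Fin n) ℂ) (hA : ∀ μ ∈ spectrum ℂ A, 0 < μ.im)
    (D : Matrix (Fin m) (Fin m) ℂ) (hD : ∀ μ ∈ spectrum ℂ D, 0 < μ.im)
    (Q : Matrix (Fin n) (Fin m) ℂ) (J : Matrix (Fin n) (Fin m) ℂ)
    (hJ : ∀ i j, J i j = ∫ z in Set.Ioi (0 : ℝ), (eiA A z * Q * eiA D z) i j)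
    (x : ℝ) (i : Fin n) (j : Fin m) :
    (eiA A x * J * eiA D x) i j = ∫ z in Set.Ioi x, (eiA A z * Q * eiA D z) i j := by
  have h := (measurePreserving_add_right volume x).setIntegral_preimage_emb
    (measurableEmbedding_addRight x) (fun z => (eiA A z * Q * eiA D z) i j) (Set.Ioi x)
  rw [Set.preimage_add_const_Ioi, sub_self] at h
  rw [← h, ← integral_sandwich _ _ (F_integrable A hA D hD Q 0) J hJ]
  refine integral_congr_ae (Filter.Eventually.of_forall fun z => ?_)
  show _ = (eiA A (z + x) * Q * eiA D (z + x)) i j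
  rw [add_comm z x, eiA_add A, add_comm x z, eiA_add D]
  simp only [Matrix.mul_assoc]

lemma eiA_comm {n : ℕ} (A : Matrix (Fin n) (Fin n) ℂ) (t : ℝ) : A * eiA A t = eiA A t * A := by
  have : Commute A (eiA A t) := ((Commute.refl A).smul_right _).exp_right
  exact this

lemma scal {k l : ℕ} (X : Matrix (Fin k) (Fin 1) ℂ) (Y : Matrix (Fin 1) (Fin l) ℂ) (i : Fin k)
    (j : Fin l) : X i 0 * Y 0 j = (X * Y) i j := by
  simp [Matrix.mul_apply]

/-- Theorem 5.1, first Marchenko equation: the explicit kernel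
K₁(x,y) = −C̄ e^{-iĀx} Γ̄(x)⁻¹ e^{-iĀy} B̄ solves the reflectionless Marchenko equation. -/
theorem marchenko_solution_K1
    (𝒩 𝒩b : ℕ)
    (A : Matrix (Fin 𝒩) (Fin 𝒩) ℂ) (hA : ∀ μ ∈ spectrum ℂ A, 0 < μ.im)
    (B : Matrix (Fin 𝒩) (Fin 1) ℂ) (C : Matrix (Fin 1) (Fin 𝒩) ℂ)
    (Ab : Matrix (Fin 𝒩b) (Fin 𝒩b) ℂ) (hAb : ∀ μ ∈ spectrum ℂ Ab, μ.im < 0)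
    (Bb : Matrix (Fin 𝒩b) (Fin 1) ℂ) (Cb : Matrix (Fin 1) (Fin 𝒩b) ℂ)
    (M : Matrix (Fin 𝒩) (Fin 𝒩b) ℂ)
    (hM : ∀ i j, M i j = ∫ z in Set.Ioi (0 : ℝ), (eiA A z * B * Cb * eiA Ab (-z)) i j)
    (Mb : Matrix (Fin 𝒩b) (Fin 𝒩) ℂ)
    (hMb : ∀ i j, Mb i j = ∫ z in Set.Ioi (0 : ℝ), (eiA Ab (-z) * Bb * C * eiA A z) i j)
    (x : ℝ)
    (Γb : Matrix (Fin 𝒩b) (Fin 𝒩b) ℂ)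
    (hΓb : Γb = 1 - eiA Ab (-x) * Mb * A * eiA A (2 * x) * M * eiA Ab (-x))
    (hΓbinv : IsUnit Γb)
    (K₁ : ℝ → ℂ)
    (hK₁ : ∀ y : ℝ, x ≤ y →
      K₁ y = -((Cb * eiA Ab (-x) * Γb⁻¹ * eiA Ab (-y) * Bb) 0 0)) :
    ∀ y : ℝ, x < y →
      K₁ y + (Cb * eiA Ab (-(x + y)) * Bb) 0 0
        + Complex.I * ∫ z in Set.Ioi x, ∫ s in Set.Ioi x,
            K₁ z * (Complex.I * ((C * (A * eiA A (z + s)) * B) 0 0))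
              * ((Cb * eiA Ab (-(s + y)) * Bb) 0 0) = 0 := by
  intro y hy
  have hD : ∀ μ ∈ spectrum ℂ (-Ab), 0 < μ.im := by
    intro μ hμ
    rw [← spectrum.neg_eq] at hμ
    have := hAb (-μ) hμ
    simpa using this
  simp only [eiA_neg] at hM hMb hΓb hK₁ ⊢
  set D := -Ab with hDdef
  set J := eiA A x * M * eiA D x with hJ
  set Jb := eiA D x * Mb * eiA A x with hJb
  have hM' : ∀ i j, M i j = ∫ z in Set.Ioi (0 : ℝ), (eiA A z * (B * Cb) * eiA D z) i j := by
    simpa only [Matrix.mul_assoc] using hM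
  have hMb' : ∀ i j, Mb i j = ∫ z in Set.Ioi (0 : ℝ), (eiA D z * (Bb * C) * eiA A z) i j := by
    simpa only [Matrix.mul_assoc] using hMb
  have hJi := integral_shift A hA D hD (B * Cb) M hM' x
  have hJbi := integral_shift D hD A hA (Bb * C) Mb hMb' x
  set L := Cb * eiA D x * Γb⁻¹ with hL
  set R := eiA D y * Bb with hR
  have hΓ : Jb * A * J = 1 - Γb := by
    rw [hΓb, sub_sub_cancel, two_mul, eiA_add, hJ, hJb]
    have key : ∀ Z : Matrix (Fin 𝒩) (Fin 𝒩b) ℂ, A * (eiA A x * Z) = eiA A x * (A * Z) := by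
      intro Z
      rw [← Matrix.mul_assoc, eiA_comm, Matrix.mul_assoc]
    simp only [Matrix.mul_assoc, key]
  have inner : ∀ z ∈ Set.Ioi x, (∫ s in Set.Ioi x,
            K₁ z * (Complex.I * ((C * (A * eiA A (z + s)) * B) 0 0))
              * ((Cb * eiA D (s + y) * Bb) 0 0))
        = -Complex.I * (L * (eiA D z * (Bb * C) * eiA A z) * (A * J * R)) 0 0 := by
    intro z hz
    have e1 : ∀ s : ℝ, K₁ z * (Complex.I * ((C * (A * eiA A (z + s)) * B) 0 0))
              * ((Cb * eiA D (s + y) * Bb) 0 0)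
        = (K₁ z * Complex.I) *
          ((C * A * eiA A z) * (eiA A s * (B * Cb) * eiA D s) * R) 0 0 := by
      intro s
      have : K₁ z * (Complex.I * ((C * (A * eiA A (z + s)) * B) 0 0))
              * ((Cb * eiA D (s + y) * Bb) 0 0) = K₁ z * Complex.I *
            (((C * (A * eiA A (z + s)) * B) 0 0) * ((Cb * eiA D (s + y) * Bb) 0 0)) := by ring
      rw [this, scal, eiA_add, eiA_add, hR]
      simp only [Matrix.mul_assoc]
    simp only [e1]
    rw [integral_const_mul, integral_sandwich _ _ (F_integrable A hA D hD (B * Cb) x) J hJi,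
      hK₁ z (le_of_lt hz)]
    have e2 : ∀ a b : ℂ, -a * Complex.I * b = -Complex.I * (a * b) := by intros; ring
    rw [e2, scal]
    congr 2
    simp only [hL, Matrix.mul_assoc]
    rw [← Matrix.mul_assoc A (eiA A z), eiA_comm]
    simp only [Matrix.mul_assoc]
  rw [setIntegral_congr_fun measurableSet_Ioi inner, integral_const_mul,
    integral_sandwich _ _ (F_integrable D hD A hA (Bb * C) x) Jb hJbi, hK₁ y hy.le, eiA_add]
  have hdet : IsUnit Γb.det := (Matrix.isUnit_iff_isUnit_det _).mp hΓbinv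
  have e3 : L * Jb * (A * J * R) = L * R - Cb * eiA D x * R := by
    have : L * Jb * (A * J * R) = L * (Jb * A * J) * R := by simp only [Matrix.mul_assoc]
    rw [this, hΓ, Matrix.mul_sub, Matrix.mul_one, Matrix.sub_mul, hL,
      Matrix.nonsing_inv_mul_cancel_right _ _ hdet]
  have e4 : L * eiA D y * Bb = L * R := by rw [hR, Matrix.mul_assoc]
  have e5 : Cb * (eiA D x * eiA D y) * Bb = Cb * eiA D x * R := by
    rw [hR]; simp only [Matrix.mul_assoc]
  rw [e3, e4, e5, ← mul_assoc, mul_neg, Complex.I_mul_I, Matrix.sub_apply]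
  ring
end

section
/- (Theorem 5.5, analytic core: equal number of bound states in the reflectionless case.) Let c ∈ ℂ with c ≠ 0. Let λ₁, …, λ_N be points in the open upper half-plane with positive integer multiplicities m₁, …, m_N, and λ̄₁, …, λ̄_{N̄} points in the open lower half-plane with positive integer multiplicities m̄₁, …, m̄_{N̄}. Let g : ℂ → ℂ be continuous on the closed upper half-plane {Im λ ≥ 0}, complex differentiable on the open upper half-plane, nonvanishing on the closed upper half-plane, and suppose there exist constants K, R > 0 with |g(λ) − c| ≤ K/|λ| for all λ with Im λ ≥ 0 and |λ| ≥ R. Let ḡ : ℂ → ℂ be continuous on the closed lower half-plane, complex differentiable on the open lower half-plane, nonvanishing on the closed lower half-plane, with |ḡ(λ) − 1/c| ≤ K/|λ| for all λ with Im λ ≤ 0 and |λ| ≥ R. If for every real λ one has (1/(g(λ)·ḡ(λ))) · ∏_{j=1}^{N} ((λ − conj(λ_j))/(λ − λ_j))^{m_j} · ∏_{k=1}^{N̄} ((λ − conj(λ̄_k))/(λ − λ̄_k))^{m̄_k} = 1, then ∑_{j=1}^{N} m_j = ∑_{k=1}^{N̄} m̄_k. -/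
open Complex

theorem rb_morera (F : ℂ → ℂ) (hF : Continuous F)
    (hd : ∀ z : ℂ, z.im ≠ 0 → DifferentiableAt ℂ F z) : Differentiable ℂ F := by
  have key : ∀ z w : ℂ, (z.im = 0 ∨ w.im = 0) → 
      (∫ x : ℝ in z.re..w.re, F (x + z.im * I)) - (∫ x : ℝ in z.re..w.re, F (x + w.im * I)) +
      I • (∫ y : ℝ in z.im..w.im, F (re w + y * I)) -
      I • (∫ y : ℝ in z.im..w.im, F (re z + y * I)) = 0 := by
    intro z w h
    apply integral_boundary_rect_eq_zero_of_continuousOn_of_differentiableOn F z w hF.continuousOn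
    intro x hx
    refine (hd x ?_).differentiableWithinAt
    have h2 : x.im ∈ Set.Ioo (min z.im w.im) (max z.im w.im) := hx.2
    intro h0
    rw [h0] at h2
    rcases h with h | h <;> rw [h] at h2 <;> simp at h2 <;> grind
  have hex : IsExactOn F Set.univ := by
    apply IsConservativeOn.isExactOn_univ hF
    intro z w _
    rw [← add_eq_zero_iff_eq_neg, wedgeIntegral_add_wedgeIntegral_eq]
    have h1 := key z (w.re : ℂ) (Or.inr (by simp))
    have h2 := key (z.re : ℂ) w (Or.inl (by simp))
    simp only [ofReal_re, ofReal_im] at h1 h2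
    have hi : ∀ (p : ℝ) (a b : ℝ),
        IntervalIntegrable (fun y : ℝ => F (p + y * I)) MeasureTheory.volume a b := by
      intro p a b
      apply Continuous.intervalIntegrable
      fun_prop
    rw [← intervalIntegral.integral_add_adjacent_intervals (hi w.re z.im 0) (hi w.re 0 w.im),
      ← intervalIntegral.integral_add_adjacent_intervals (hi z.re z.im 0) (hi z.re 0 w.im)]
    simp only [smul_eq_mul] at *
    linear_combination h1 + h2
  exact differentiableOn_univ.1 (hex.differentiableOn isOpen_univ)

theorem rb_glue (A B : ℂ → ℂ)
    (hA : ContinuousOn A {z : ℂ | 0 ≤ z.im}) (hA' : ∀ z : ℂ, 0 < z.im → DifferentiableAt ℂ A z)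
    (hB : ContinuousOn B {z : ℂ | z.im ≤ 0}) (hB' : ∀ z : ℂ, z.im < 0 → DifferentiableAt ℂ B z)
    (hAB : ∀ t : ℝ, A t = B t)
    (hAt : Filter.Tendsto A (Filter.cocompact ℂ ⊓ Filter.principal {z : ℂ | 0 ≤ z.im}) (nhds 0))
    (hBt : Filter.Tendsto B (Filter.cocompact ℂ ⊓ Filter.principal {z : ℂ | z.im ≤ 0}) (nhds 0)) :
    A 0 = 0 := by
  classical
  set F : ℂ → ℂ := fun z => if 0 ≤ z.im then A z else B z with hFdef
  have hFc : Continuous F := by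
    apply continuous_if_le continuous_const continuous_im hA hB
    intro x hx
    have : x = (x.re : ℂ) := by apply Complex.ext <;> simp [← hx]
    rw [this]; exact hAB _
  have hFd : Differentiable ℂ F := by
    apply rb_morera F hFc
    intro z hz
    rcases lt_or_gt_of_ne hz with h | h
    · apply (hB' z h).congr_of_eventuallyEq
      filter_upwards [(isOpen_lt continuous_im continuous_const).mem_nhds h] with w hw
      have hw : w.im < 0 := hw
      simp [F, not_le.2 hw]
    · apply (hA' z h).congr_of_eventuallyEq
      filter_upwards [(isOpen_lt continuous_const continuous_im).mem_nhds h] with w hw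
      have hw : 0 < w.im := hw
      simp [F, hw.le]
  have hFt : Filter.Tendsto F (Filter.cocompact ℂ) (nhds 0) := by
    apply Filter.Tendsto.if hAt
    apply hBt.mono_left
    apply inf_le_inf_left
    apply Filter.principal_mono.2
    intro z hz
    exact (not_le.1 hz).le
  have := hFd.apply_eq_of_tendsto_cocompact 0 hFt
  simpa [F] using this

theorem rb_lead {n : ℕ} (a : Fin n → ℂ) (k : Fin n → ℕ) :
    Filter.Tendsto (fun z : ℂ => (∏ i, (z - a i) ^ (k i)) / z ^ (∑ i, k i))
      (Filter.cocompact ℂ) (nhds 1) := by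
  have h1 : ∀ b : ℂ, Filter.Tendsto (fun z : ℂ => 1 - b * z⁻¹) (Filter.cocompact ℂ) (nhds 1) := by
    intro b
    have := (Filter.tendsto_inv₀_cobounded (α := ℂ)).const_mul b
    rw [Metric.cobounded_eq_cocompact] at this
    simpa using this.const_sub 1
  have h2 : Filter.Tendsto (fun z : ℂ => ∏ i, (1 - a i * z⁻¹) ^ (k i))
      (Filter.cocompact ℂ) (nhds (∏ i : Fin n, 1 ^ (k i))) :=
    tendsto_finsetProd _ fun i _ => (h1 (a i)).pow (k i)
  simp only [one_pow, Finset.prod_const_one] at h2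
  refine h2.congr' ?_
  have hne : ∀ᶠ z : ℂ in Filter.cocompact ℂ, z ≠ 0 := by
    exact (isCompact_singleton (x := (0:ℂ))).compl_mem_cocompact
  filter_upwards [hne] with z hz
  rw [← Finset.prod_pow_eq_pow_sum, ← Finset.prod_div_distrib]
  refine Finset.prod_congr rfl fun i _ => ?_
  rw [← div_pow]
  congr 1
  field_simp

theorem rb_quot {n n' : ℕ} (a : Fin n → ℂ) (k : Fin n → ℕ) (b : Fin n' → ℂ) (l : Fin n' → ℕ)
    (h : ∑ i, k i < ∑ i, l i) :
    Filter.Tendsto (fun z : ℂ => (∏ i, (z - a i) ^ (k i)) / (∏ i, (z - b i) ^ (l i)))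
      (Filter.cocompact ℂ) (nhds 0) := by
  have h0 : Filter.Tendsto (fun z : ℂ => (z⁻¹) ^ (∑ i, l i - ∑ i, k i))
      (Filter.cocompact ℂ) (nhds 0) := by
    have := (Filter.tendsto_inv₀_cobounded (α := ℂ)).pow (∑ i, l i - ∑ i, k i)
    rw [Metric.cobounded_eq_cocompact, zero_pow (by omega)] at this
    exact this
  have h3 := ((rb_lead a k).div (rb_lead b l) one_ne_zero).mul h0
  rw [mul_zero] at h3
  refine h3.congr' ?_
  have hne : ∀ᶠ z : ℂ in Filter.cocompact ℂ, z ≠ 0 := by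
    exact (isCompact_singleton (x := (0:ℂ))).compl_mem_cocompact
  filter_upwards [hne] with z hz
  obtain ⟨d, hd⟩ := Nat.exists_eq_add_of_lt h
  have hz1 : z ^ (∑ i, l i) = z ^ (∑ i, k i) * z ^ (∑ i, l i - ∑ i, k i) := by
    rw [← pow_add]; congr 1; omega
  simp only [Pi.div_apply]
  rw [hz1, inv_pow]
  have e1 : z ^ (∑ i, k i) ≠ 0 := pow_ne_zero _ hz
  have e2 : z ^ (∑ i, l i - ∑ i, k i) ≠ 0 := pow_ne_zero _ hz
  generalize z ^ (∑ i, k i) = x at *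
  generalize z ^ (∑ i, l i - ∑ i, k i) = y at *
  field_simp

theorem rb_ne {n : ℕ} (a : Fin n → ℂ) (k : Fin n → ℕ) (z : ℂ) (h : ∀ i, z ≠ a i) :
    ∏ i, (z - a i) ^ (k i) ≠ 0 :=
  Finset.prod_ne_zero_iff.2 fun i _ => pow_ne_zero _ (sub_ne_zero.2 (h i))

theorem rb_asy (g : ℂ → ℂ) (c : ℂ) (S : Set ℂ) (K R : ℝ)
    (h : ∀ z ∈ S, R ≤ ‖z‖ → ‖g z - c‖ ≤ K / ‖z‖) :
    Filter.Tendsto g (Filter.cocompact ℂ ⊓ Filter.principal S) (nhds c) := by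
  rw [tendsto_iff_norm_sub_tendsto_zero]
  have hn : Filter.Tendsto (fun z : ℂ => ‖z‖) (Filter.cocompact ℂ ⊓ Filter.principal S)
      Filter.atTop := (tendsto_norm_cocompact_atTop (E := ℂ)).mono_left inf_le_left
  refine squeeze_zero' (Filter.Eventually.of_forall fun _ => norm_nonneg _) ?_
    (hn.const_div_atTop K)
  have hS : S ∈ Filter.cocompact ℂ ⊓ Filter.principal S :=
    Filter.mem_inf_of_right (Filter.mem_principal_self S)
  filter_upwards [hS, hn.eventually_ge_atTop R] with z hz hz2
  exact h z hz hz2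

/-- The common core of both cases. -/
theorem rb_core {n n' p p' : ℕ} (u v : ℂ → ℂ) (cu cv : ℂ)
    (a : Fin n → ℂ) (k : Fin n → ℕ) (b : Fin n' → ℂ) (l : Fin n' → ℕ)
    (a' : Fin p → ℂ) (k' : Fin p → ℕ) (b' : Fin p' → ℂ) (l' : Fin p' → ℕ)
    (hkl : ∑ i, k i < ∑ i, l i) (hkl' : ∑ i, k' i < ∑ i, l' i)
    (ha : ∀ i, (a i).im ≠ 0) (hb : ∀ i, (b i).im < 0) (hb' : ∀ i, 0 < (b' i).im)
    (hu : ContinuousOn u {z : ℂ | 0 ≤ z.im}) (hud : ∀ z : ℂ, 0 < z.im → DifferentiableAt ℂ u z)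
    (hv : ContinuousOn v {z : ℂ | z.im ≤ 0}) (hvd : ∀ z : ℂ, z.im < 0 → DifferentiableAt ℂ v z)
    (hut : Filter.Tendsto u (Filter.cocompact ℂ ⊓ Filter.principal {z : ℂ | 0 ≤ z.im}) (nhds cu))
    (hvt : Filter.Tendsto v (Filter.cocompact ℂ ⊓ Filter.principal {z : ℂ | z.im ≤ 0}) (nhds cv))
    (hu0 : u 0 ≠ 0)
    (heq : ∀ t : ℝ, u t * ((∏ i, ((t : ℂ) - a i) ^ (k i)) / (∏ i, ((t : ℂ) - b i) ^ (l i)))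
      = v t * ((∏ i, ((t : ℂ) - a' i) ^ (k' i)) / (∏ i, ((t : ℂ) - b' i) ^ (l' i)))) : False := by
  have nb : ∀ z : ℂ, 0 ≤ z.im → ∏ i, (z - b i) ^ (l i) ≠ 0 := by
    intro z hz
    apply rb_ne
    intro i hi
    have := hb i
    rw [← hi] at this
    linarith
  have nb' : ∀ z : ℂ, z.im ≤ 0 → ∏ i, (z - b' i) ^ (l' i) ≠ 0 := by
    intro z hz
    apply rb_ne
    intro i hi
    have := hb' i
    rw [← hi] at this
    linarith
  have h := rb_glue
    (fun z => u z * ((∏ i, (z - a i) ^ (k i)) / (∏ i, (z - b i) ^ (l i))))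
    (fun z => v z * ((∏ i, (z - a' i) ^ (k' i)) / (∏ i, (z - b' i) ^ (l' i))))
    (hu.mul (ContinuousOn.div (by fun_prop) (by fun_prop) nb))
    (fun z hz => (hud z hz).mul (DifferentiableAt.div (by fun_prop) (by fun_prop) (nb z hz.le)))
    (hv.mul (ContinuousOn.div (by fun_prop) (by fun_prop) nb'))
    (fun z hz => (hvd z hz).mul (DifferentiableAt.div (by fun_prop) (by fun_prop) (nb' z hz.le)))
    heq
    (by simpa using hut.mul ((rb_quot a k b l hkl).mono_left inf_le_left))
    (by simpa using hvt.mul ((rb_quot a' k' b' l' hkl').mono_left inf_le_left))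
  have h0 : ∏ i, ((0 : ℂ) - a i) ^ (k i) ≠ 0 := by
    apply rb_ne
    intro i hi
    apply ha i
    rw [← hi]; simp
  exact mul_ne_zero hu0 (div_ne_zero h0 (nb 0 (by simp))) h



/-- Theorem 5.5, analytic core: in the reflectionless case the total number of
bound-state poles (with multiplicity) in the upper half-plane equals that in the
lower half-plane. -/
theorem reflectionless_equal_bound_states
    (c : ℂ) (hc : c ≠ 0)
    (N Nb : ℕ)
    (lam : Fin N → ℂ) (hlam : ∀ j, 0 < (lam j).im)
    (m : Fin N → ℕ) (hm : ∀ j, 0 < m j)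
    (lamb : Fin Nb → ℂ) (hlamb : ∀ k, (lamb k).im < 0)
    (mb : Fin Nb → ℕ) (hmb : ∀ k, 0 < mb k)
    (g gb : ℂ → ℂ)
    (hgcont : ContinuousOn g {z : ℂ | 0 ≤ z.im})
    (hgdiff : ∀ z : ℂ, 0 < z.im → DifferentiableAt ℂ g z)
    (hgne : ∀ z : ℂ, 0 ≤ z.im → g z ≠ 0)
    (hgbcont : ContinuousOn gb {z : ℂ | z.im ≤ 0})
    (hgbdiff : ∀ z : ℂ, z.im < 0 → DifferentiableAt ℂ gb z)
    (hgbne : ∀ z : ℂ, z.im ≤ 0 → gb z ≠ 0)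
    (K R : ℝ) (hK : 0 < K) (hR : 0 < R)
    (hgasy : ∀ z : ℂ, 0 ≤ z.im → R ≤ ‖z‖ → ‖g z - c‖ ≤ K / ‖z‖)
    (hgbasy : ∀ z : ℂ, z.im ≤ 0 → R ≤ ‖z‖ →
      ‖gb z - 1 / c‖ ≤ K / ‖z‖)
    (hid : ∀ t : ℝ,
      (1 / (g t * gb t))
        * (∏ j, (((t : ℂ) - starRingEnd ℂ (lam j)) / ((t : ℂ) - lam j)) ^ (m j))
        * (∏ k, (((t : ℂ) - starRingEnd ℂ (lamb k)) / ((t : ℂ) - lamb k)) ^ (mb k)) = 1) :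
    ∑ j, m j = ∑ k, mb k := by
  have hgt := rb_asy g c {z : ℂ | 0 ≤ z.im} K R hgasy
  have hgbt := rb_asy gb (1 / c) {z : ℂ | z.im ≤ 0} K R hgbasy
  have hc' : (1 / c) ≠ 0 := one_div_ne_zero hc
  simp only [div_pow, Finset.prod_div_distrib] at hid
  have n1 : ∀ t : ℝ, ∏ j, ((t : ℂ) - lam j) ^ (m j) ≠ 0 := fun t => rb_ne _ _ _ fun i hi => by
    have := hlam i
    rw [← hi] at this; simp at this
  have n2 : ∀ t : ℝ, ∏ j, ((t : ℂ) - starRingEnd ℂ (lam j)) ^ (m j) ≠ 0 := fun t =>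
    rb_ne _ _ _ fun i hi => by
      have h1 := hlam i
      have h2 := congrArg Complex.im hi
      simp at h2
      linarith
  have n3 : ∀ t : ℝ, ∏ j, ((t : ℂ) - lamb j) ^ (mb j) ≠ 0 := fun t => rb_ne _ _ _ fun i hi => by
    have := hlamb i
    rw [← hi] at this; simp at this
  have n4 : ∀ t : ℝ, ∏ j, ((t : ℂ) - starRingEnd ℂ (lamb j)) ^ (mb j) ≠ 0 := fun t =>
    rb_ne _ _ _ fun i hi => by
      have h1 := hlamb i
      have h2 := congrArg Complex.im hi
      simp at h2
      linarith
  rcases lt_trichotomy (∑ j, m j) (∑ k, mb k) with h | h | h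
  · exfalso
    refine rb_core (fun z => (g z)⁻¹) gb c⁻¹ (1 / c) (fun j => starRingEnd ℂ (lam j)) m lamb mb
      lam m (fun k => starRingEnd ℂ (lamb k)) mb h h (fun i => by simpa using (hlam i).ne')
      hlamb (fun i => by simpa using hlamb i) (hgcont.inv₀ hgne)
      (fun z hz => (hgdiff z hz).inv (hgne z hz.le)) hgbcont hgbdiff (hgt.inv₀ hc) hgbt
      (inv_ne_zero (hgne 0 (by simp))) ?_
    intro t
    have e := hid t
    have q1 := n1 t
    have q2 := n2 t
    have q3 := n3 t
    have q4 := n4 t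
    have q5 := hgne t (by simp)
    have q6 := hgbne t (by simp)
    generalize ∏ j, ((t : ℂ) - lam j) ^ (m j) = x1 at *
    generalize ∏ j, ((t : ℂ) - starRingEnd ℂ (lam j)) ^ (m j) = x2 at *
    generalize ∏ j, ((t : ℂ) - lamb j) ^ (mb j) = x3 at *
    generalize ∏ j, ((t : ℂ) - starRingEnd ℂ (lamb j)) ^ (mb j) = x4 at *
    field_simp at e ⊢
    linear_combination e
  · exact h
  · exfalso
    refine rb_core g (fun z => (gb z)⁻¹) c (1 / c)⁻¹ lamb mb (fun j => starRingEnd ℂ (lam j)) m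
      (fun k => starRingEnd ℂ (lamb k)) mb lam m h h (fun i => (hlamb i).ne)
      (fun i => by simpa using hlam i) hlam hgcont hgdiff (hgbcont.inv₀ hgbne)
      (fun z hz => (hgbdiff z hz).inv (hgbne z hz.le)) hgt (hgbt.inv₀ hc')
      (hgne 0 (by simp)) ?_
    intro t
    have e := hid t
    have q1 := n1 t
    have q2 := n2 t
    have q3 := n3 t
    have q4 := n4 t
    have q5 := hgne t (by simp)
    have q6 := hgbne t (by simp)
    generalize ∏ j, ((t : ℂ) - lam j) ^ (m j) = x1 at *
    generalize ∏ j, ((t : ℂ) - starRingEnd ℂ (lam j)) ^ (m j) = x2 at *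
    generalize ∏ j, ((t : ℂ) - lamb j) ^ (mb j) = x3 at *
    generalize ∏ j, ((t : ℂ) - starRingEnd ℂ (lamb j)) ^ (mb j) = x4 at *
    field_simp at e ⊢
    linear_combination -e
end

section
/- (Example 6.3, verification that ψ solves (1.1).) With q, r, art as in the context, let ζ ∈ ℂ with λ := ζ² ≠ −2i, and define ψ₁(ζ, x) := −9ζ·exp(iλx + 2x − 2·art(1/3 − i·e^{6x})) / ((λ + 2i)·(2 + 3i·e^{6x})) and ψ₂(ζ, x) := (4(λ − i) − 3i·e^{6x}·(λ + 2i))·exp(iλx + 2·art(1/3 − i·e^{6x})) / ((λ + 2i)·(−4 + 3i·e^{6x})). Then for every x ∈ ℝ the pair (ψ₁(ζ,·), ψ₂(ζ,·)) is a solution of system (1.1) with potentials q, r and spectral parameter ζ: ∂ψ₁/∂x = −iζ²·ψ₁ + ζ·q(x)·ψ₂ and ∂ψ₂/∂x = ζ·r(x)·ψ₁ + iζ²·ψ₂. -/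
/-- Principal inverse hyperbolic tangent. -/
noncomputable def art (w : ℂ) : ℂ :=
  (Complex.log (1 + w) - Complex.log (1 - w)) / 2

/-- The potential q of Example 6.3. -/
noncomputable def qEx (x : ℝ) : ℂ :=
  18 / (3 * Complex.exp (6 * x) - 2 * Complex.I)
    * Complex.exp (2 * x - 4 * art (1 / 3 - Complex.I * Complex.exp (6 * x)))

/-- The potential r of Example 6.3. -/
noncomputable def rEx (x : ℝ) : ℂ :=
  12 / (3 * Complex.exp (6 * x) + 4 * Complex.I)
    * Complex.exp (4 * x + 4 * art (1 / 3 - Complex.I * Complex.exp (6 * x)))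

/-- The first component of the Jost solution ψ of Example 6.3. -/
noncomputable def ψ₁Ex (ζ : ℂ) (x : ℝ) : ℂ :=
  -9 * ζ * Complex.exp (Complex.I * ζ ^ 2 * x + 2 * x
      - 2 * art (1 / 3 - Complex.I * Complex.exp (6 * x)))
    / ((ζ ^ 2 + 2 * Complex.I) * (2 + 3 * Complex.I * Complex.exp (6 * x)))

/-- The second component of the Jost solution ψ of Example 6.3. -/
noncomputable def ψ₂Ex (ζ : ℂ) (x : ℝ) : ℂ :=
  (4 * (ζ ^ 2 - Complex.I) - 3 * Complex.I * Complex.exp (6 * x) * (ζ ^ 2 + 2 * Complex.I))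
    * Complex.exp (Complex.I * ζ ^ 2 * x
      + 2 * art (1 / 3 - Complex.I * Complex.exp (6 * x)))
    / ((ζ ^ 2 + 2 * Complex.I) * (-4 + 3 * Complex.I * Complex.exp (6 * x)))

lemma E_im (x : ℝ) : (Complex.exp (6 * x)).im = 0 := by
  have : (6 * (x : ℂ)) = ((6 * x : ℝ) : ℂ) := by push_cast; rfl
  rw [this, Complex.exp_ofReal_im]

lemma D4_ne (x : ℝ) : 4 - 3 * Complex.I * Complex.exp (6 * x) ≠ 0 := by
  intro h
  have h2 := congrArg Complex.re h
  simp [E_im] at h2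

lemma D2_ne (x : ℝ) : 2 + 3 * Complex.I * Complex.exp (6 * x) ≠ 0 := by
  intro h
  have h2 := congrArg Complex.re h
  simp [E_im] at h2

lemma exp_art (x : ℝ) : Complex.exp (2 * art (1 / 3 - Complex.I * Complex.exp (6 * x)))
    = (4 - 3 * Complex.I * Complex.exp (6 * x)) / (2 + 3 * Complex.I * Complex.exp (6 * x)) := by
  have h4 := D4_ne x
  have h2 := D2_ne x
  have e1 : 1 + (1 / 3 - Complex.I * Complex.exp (6 * x))
      = (4 - 3 * Complex.I * Complex.exp (6 * x)) / 3 := by ring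
  have e2 : 1 - (1 / 3 - Complex.I * Complex.exp (6 * x))
      = (2 + 3 * Complex.I * Complex.exp (6 * x)) / 3 := by ring
  unfold art
  rw [mul_div_cancel₀ _ two_ne_zero, Complex.exp_sub, e1, e2, Complex.exp_log (by simpa using h4),
    Complex.exp_log (by simpa using h2)]
  field_simp

lemma psi1_eq (ζ : ℂ) (hL : ζ ^ 2 + 2 * Complex.I ≠ 0) (x : ℝ) :
    ψ₁Ex ζ x = -9 * ζ * Complex.exp ((Complex.I * ζ ^ 2 + 2) * x)
      / ((ζ ^ 2 + 2 * Complex.I) * (4 - 3 * Complex.I * Complex.exp (6 * x))) := by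
  have h4 := D4_ne x
  have h2 := D2_ne x
  unfold ψ₁Ex
  rw [Complex.exp_sub, exp_art, add_mul (Complex.I * ζ ^ 2) 2 (x : ℂ)]
  generalize 4 - 3 * Complex.I * Complex.exp (6 * x) = A at *
  generalize 2 + 3 * Complex.I * Complex.exp (6 * x) = B at *
  generalize hM : ζ ^ 2 + 2 * Complex.I = M at *
  field_simp

lemma psi2_eq (ζ : ℂ) (hL : ζ ^ 2 + 2 * Complex.I ≠ 0) (x : ℝ) :
    ψ₂Ex ζ x = -(4 * (ζ ^ 2 - Complex.I)
        - 3 * Complex.I * Complex.exp (6 * x) * (ζ ^ 2 + 2 * Complex.I))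
      * Complex.exp ((Complex.I * ζ ^ 2) * x)
      / ((ζ ^ 2 + 2 * Complex.I) * (2 + 3 * Complex.I * Complex.exp (6 * x))) := by
  have h4 := D4_ne x
  have h2 := D2_ne x
  unfold ψ₂Ex
  have e : -4 + 3 * Complex.I * Complex.exp (6 * x)
    = -(4 - 3 * Complex.I * Complex.exp (6 * x)) := by ring
  rw [Complex.exp_add, exp_art, e]
  generalize 4 - 3 * Complex.I * Complex.exp (6 * x) = A at *
  generalize 2 + 3 * Complex.I * Complex.exp (6 * x) = B at *
  generalize hM : ζ ^ 2 + 2 * Complex.I = M at *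
  field_simp

lemma q_eq (x : ℝ) : qEx x = 18 * Complex.I * Complex.exp (2 * x)
    * (2 + 3 * Complex.I * Complex.exp (6 * x))
      / (4 - 3 * Complex.I * Complex.exp (6 * x)) ^ 2 := by
  have h4 := D4_ne x
  have h2 := D2_ne x
  have e : 3 * Complex.exp (6 * x) - 2 * Complex.I
    = (2 + 3 * Complex.I * Complex.exp (6 * x)) / Complex.I := by
    rw [Complex.div_I]; linear_combination (3 * Complex.exp (6 * x)) * Complex.I_sq
  have e' : ∀ a : ℂ, 4 * a = 2 * a + 2 * a := fun a => by ring
  unfold qEx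
  rw [e, e', Complex.exp_sub, Complex.exp_add, exp_art]
  generalize 4 - 3 * Complex.I * Complex.exp (6 * x) = A at *
  generalize 2 + 3 * Complex.I * Complex.exp (6 * x) = B at *
  have := Complex.I_ne_zero
  field_simp

lemma r_eq (x : ℝ) : rEx x = -12 * Complex.I * Complex.exp (4 * x)
    * (4 - 3 * Complex.I * Complex.exp (6 * x))
      / (2 + 3 * Complex.I * Complex.exp (6 * x)) ^ 2 := by
  have h4 := D4_ne x
  have h2 := D2_ne x
  have e : 3 * Complex.exp (6 * x) + 4 * Complex.I
    = Complex.I * (4 - 3 * Complex.I * Complex.exp (6 * x)) := by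
    linear_combination (3 * Complex.exp (6 * x)) * Complex.I_sq
  have e' : ∀ a : ℂ, 4 * a = 2 * a + 2 * a := fun a => by ring
  unfold rEx
  rw [e, e' (art _), Complex.exp_add, Complex.exp_add, exp_art]
  clear e
  generalize 4 - 3 * Complex.I * Complex.exp (6 * x) = A at *
  generalize 2 + 3 * Complex.I * Complex.exp (6 * x) = B at *
  have := Complex.I_ne_zero
  field_simp
  linear_combination Complex.I_sq

lemma hexp (c : ℂ) (x : ℝ) :
    HasDerivAt (fun y : ℝ => Complex.exp (c * y)) (Complex.exp (c * x) * c) x := by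
  have h : HasDerivAt (fun y : ℝ => c * (y : ℂ)) (c * 1) x :=
    (Complex.ofRealCLM.hasDerivAt (x := x)).const_mul c
  simpa using h.cexp

/-- Example 6.3: the pair (ψ₁, ψ₂) solves system (1.1) with potentials qEx, rEx. -/
theorem example63_psi_solves
    (ζ : ℂ) (hζ : ζ ^ 2 ≠ -2 * Complex.I) :
    ∀ x : ℝ,
      HasDerivAt (fun x => ψ₁Ex ζ x)
        (-Complex.I * ζ ^ 2 * ψ₁Ex ζ x + ζ * qEx x * ψ₂Ex ζ x) x ∧
      HasDerivAt (fun x => ψ₂Ex ζ x)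
        (ζ * rEx x * ψ₁Ex ζ x + Complex.I * ζ ^ 2 * ψ₂Ex ζ x) x := by
  intro x
  have hL : ζ ^ 2 + 2 * Complex.I ≠ 0 := fun h => hζ (by linear_combination h)
  have h4 := D4_ne x
  have h2 := D2_ne x
  have hE := hexp 6 x
  have hI := Complex.I_sq
  simp only [psi1_eq ζ hL, psi2_eq ζ hL, q_eq, r_eq]
  constructor
  · have hd := ((hexp (Complex.I * ζ ^ 2 + 2) x).const_mul (-9 * ζ)).div
      (((hE.const_mul (3 * Complex.I)).const_sub 4).const_mul (ζ ^ 2 + 2 * Complex.I))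
      (mul_ne_zero hL h4)
    refine hd.congr_deriv ?_
    rw [add_mul, Complex.exp_add]
    generalize Complex.exp (6 * x) = E at *
    generalize Complex.exp (2 * x) = F at *
    generalize Complex.exp (Complex.I * ζ ^ 2 * x) = G at *
    clear hd hE hζ
    generalize Complex.I = i at *
    generalize hM : ζ ^ 2 + 2 * i = M at *
    generalize hA : 4 - 3 * i * E = A at *
    generalize hB : 2 + 3 * i * E = B at *
    field_simp
    grind
  · have hd := ((((hE.const_mul (3 * Complex.I)).mul_const (ζ ^ 2 + 2 * Complex.I)).const_sub
      (4 * (ζ ^ 2 - Complex.I))).neg.mul (hexp (Complex.I * ζ ^ 2) x)).div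
      (((hE.const_mul (3 * Complex.I)).const_add 2).const_mul (ζ ^ 2 + 2 * Complex.I))
      (mul_ne_zero hL h2)
    refine hd.congr_deriv ?_
    have hE6 : Complex.exp (6 * x) = Complex.exp (4 * x) * Complex.exp (2 * x) := by
      rw [← Complex.exp_add]; ring_nf
    simp only [Pi.neg_apply, Pi.mul_apply]
    rw [add_mul (Complex.I * ζ ^ 2) 2 (x : ℂ), Complex.exp_add]
    generalize Complex.exp (6 * x) = E at *
    generalize Complex.exp (2 * x) = F at *
    generalize Complex.exp (4 * x) = H at *
    generalize Complex.exp (Complex.I * ζ ^ 2 * x) = G at *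
    clear hd hE hζ
    generalize Complex.I = i at *
    generalize hM : ζ ^ 2 + 2 * i = M at *
    generalize hA : 4 - 3 * i * E = A at *
    generalize hB : 2 + 3 * i * E = B at *
    field_simp
    grind
end

section
/- (Example 6.3, asymptotics and transmission coefficient.) Let ζ ∈ ℝ and λ := ζ², and define ψ₁(ζ, x) := −9ζ·exp(iλx + 2x − 2·art(1/3 − i·e^{6x})) / ((λ + 2i)·(2 + 3i·e^{6x})) and ψ₂(ζ, x) := (4(λ − i) − 3i·e^{6x}·(λ + 2i))·exp(iλx + 2·art(1/3 − i·e^{6x})) / ((λ + 2i)·(−4 + 3i·e^{6x})). Then: (i) ψ₁(ζ, x) → 0 as x → +∞ and as x → −∞; (ii) e^{−iλx}·ψ₂(ζ, x) → 1 as x → +∞; (iii) e^{−iλx}·ψ₂(ζ, x) → −2(λ − i)/(λ + 2i) as x → −∞, i.e., the limit equals 1/T(ζ) for the transmission coefficient T(ζ) = −(λ + 2i)/(2(λ − i)). -/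
open Filter

lemma aux_ne (a b : ℝ) (ha : a ≠ 0 ∨ b ≠ 0) : (a : ℂ) + b * Complex.I ≠ 0 := by
  intro h
  have h1 := congrArg Complex.re h
  have h2 := congrArg Complex.im h
  simp at h1 h2
  rcases ha with h | h <;> contradiction

lemma aux_art (E : ℝ) : Complex.exp (2 * art (1 / 3 - Complex.I * E)) =
    (4 - 3 * Complex.I * E) / (2 + 3 * Complex.I * E) := by
  have h1 : (1 : ℂ) + (1 / 3 - Complex.I * E) ≠ 0 := by
    have := aux_ne (4/3) (-E) (by norm_num)
    intro h; apply this; rw [← h]; push_cast; ring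
  have h2 : (1 : ℂ) - (1 / 3 - Complex.I * E) ≠ 0 := by
    have := aux_ne (2/3) E (by norm_num)
    intro h; apply this; rw [← h]; push_cast; ring
  have h3 : (2 : ℂ) + 3 * Complex.I * E ≠ 0 := by
    have := aux_ne 2 (3 * E) (by norm_num)
    intro h; apply this; rw [← h]; push_cast; ring
  unfold art
  rw [mul_div_cancel₀ _ (two_ne_zero), Complex.exp_sub, Complex.exp_log h1, Complex.exp_log h2,
    div_eq_div_iff h2 h3]
  ring

lemma aux_lam (ζ : ℝ) : (ζ : ℂ) ^ 2 + 2 * Complex.I ≠ 0 := by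
  have := aux_ne (ζ ^ 2) 2 (by norm_num)
  intro h; apply this; rw [← h]; push_cast; ring

lemma aux_exp6 (x : ℝ) : Complex.exp (6 * x) = ((Real.exp (2 * x) ^ 3 : ℝ) : ℂ) := by
  rw [← Real.exp_nat_mul]; push_cast; congr 1; ring

lemma aux_psi1 (ζ x : ℝ) : ψ₁Ex ζ x = Complex.exp ((ζ ^ 2 * x : ℝ) * Complex.I) *
    (-9 * ζ / (ζ ^ 2 + 2 * Complex.I) * ((Real.exp (2 * x) : ℝ) /
      (4 - 3 * Complex.I * ((Real.exp (2 * x) : ℝ) : ℂ) ^ 3))) := by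
  have h0 := aux_lam ζ
  have hE := aux_exp6 x
  unfold ψ₁Ex
  rw [hE, Complex.exp_sub, Complex.exp_add, aux_art]
  have h2 : Complex.exp (2 * x) = ((Real.exp (2 * x) : ℝ) : ℂ) := by push_cast; rfl
  have h1 : Complex.exp (Complex.I * ζ ^ 2 * x) = Complex.exp ((ζ ^ 2 * x : ℝ) * Complex.I) := by
    congr 1; push_cast; ring
  rw [h1, h2]
  generalize Real.exp (2 * x) = E
  have h3 : (2 : ℂ) + 3 * Complex.I * ((E ^ 3 : ℝ) : ℂ) ≠ 0 := by
    have := aux_ne 2 (3 * E ^ 3) (by norm_num)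
    intro h; apply this; rw [← h]; push_cast; ring
  have h4 : (4 : ℂ) - 3 * Complex.I * ((E ^ 3 : ℝ) : ℂ) ≠ 0 := by
    have := aux_ne 4 (-3 * E ^ 3) (by norm_num)
    intro h; apply this; rw [← h]; push_cast; ring
  rw [Complex.ofReal_pow] at *
  generalize (ζ : ℂ) ^ 2 + 2 * Complex.I = L at *
  generalize (2 : ℂ) + 3 * Complex.I * (E : ℂ) ^ 3 = M at *
  generalize (4 : ℂ) - 3 * Complex.I * (E : ℂ) ^ 3 = N at *
  field_simp

lemma aux_psi2 (ζ x : ℝ) : Complex.exp (-Complex.I * (ζ : ℂ) ^ 2 * x) * ψ₂Ex ζ x =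
    -(4 * (ζ ^ 2 - Complex.I) - 3 * Complex.I * ((Real.exp (2 * x) : ℝ) : ℂ) ^ 3
      * (ζ ^ 2 + 2 * Complex.I)) /
    ((ζ ^ 2 + 2 * Complex.I) * (2 + 3 * Complex.I * ((Real.exp (2 * x) : ℝ) : ℂ) ^ 3)) := by
  have h0 := aux_lam ζ
  have hE := aux_exp6 x
  unfold ψ₂Ex
  rw [hE, Complex.exp_add, aux_art]
  have h1 : Complex.exp (-Complex.I * (ζ : ℂ) ^ 2 * x) =
      (Complex.exp (Complex.I * ζ ^ 2 * x))⁻¹ := by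
    rw [← Complex.exp_neg]; congr 1; ring
  rw [h1]
  have h5 := Complex.exp_ne_zero (Complex.I * ζ ^ 2 * x)
  generalize Complex.exp (Complex.I * ζ ^ 2 * x) = A at *
  generalize Real.exp (2 * x) = E
  have h3 : (2 : ℂ) + 3 * Complex.I * ((E ^ 3 : ℝ) : ℂ) ≠ 0 := by
    have := aux_ne 2 (3 * E ^ 3) (by norm_num)
    intro h; apply this; rw [← h]; push_cast; ring
  have h4 : (-4 : ℂ) + 3 * Complex.I * ((E ^ 3 : ℝ) : ℂ) ≠ 0 := by
    have := aux_ne (-4) (3 * E ^ 3) (by norm_num)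
    intro h; apply this; rw [← h]; push_cast; ring
  rw [Complex.ofReal_pow] at *
  generalize (ζ : ℂ) ^ 2 + 2 * Complex.I = L at *
  have h6 : (4 : ℂ) - 3 * Complex.I * (E : ℂ) ^ 3 = -(-4 + 3 * Complex.I * (E : ℂ) ^ 3) := by ring
  rw [h6]
  generalize (2 : ℂ) + 3 * Complex.I * (E : ℂ) ^ 3 = M at *
  generalize (-4 : ℂ) + 3 * Complex.I * (E : ℂ) ^ 3 = N at *
  field_simp

lemma aux_bdd (ζ : ℝ) (l : Filter ℝ) (f : ℝ → ℂ) (hf : Tendsto f l (nhds 0)) :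
    Tendsto (fun x : ℝ => Complex.exp ((ζ ^ 2 * x : ℝ) * Complex.I) * f x) l (nhds 0) := by
  rw [tendsto_zero_iff_norm_tendsto_zero] at hf ⊢
  simpa only [norm_mul, Complex.norm_exp_ofReal_mul_I, one_mul] using hf

lemma aux_bot : Tendsto (fun x : ℝ => Real.exp (2 * x)) atBot (nhds 0) :=
  Real.tendsto_exp_atBot.comp (tendsto_id.const_mul_atBot (by norm_num))

lemma aux_top : Tendsto (fun x : ℝ => Real.exp (-(2 * x))) atTop (nhds 0) :=
  Real.tendsto_exp_neg_atTop_nhds_zero.comp (tendsto_id.const_mul_atTop (by norm_num))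

lemma aux_comp {f : ℝ → ℂ} {l : Filter ℝ} {u : ℝ → ℝ} {c : ℂ} (hu : Tendsto u l (nhds 0))
    (hf : ContinuousAt f 0) (hc : f 0 = c) : Tendsto (fun x => f (u x)) l (nhds c) := by
  rw [← hc]; exact hf.tendsto.comp hu

/-- Example 6.3: asymptotics of the Jost solution ψ and the transmission coefficient. -/
theorem example63_asymptotics (ζ : ℝ) :
    Tendsto (fun x : ℝ => ψ₁Ex (ζ : ℂ) x) atTop (nhds 0) ∧
    Tendsto (fun x : ℝ => ψ₁Ex (ζ : ℂ) x) atBot (nhds 0) ∧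
    Tendsto (fun x : ℝ =>
        Complex.exp (-Complex.I * (ζ : ℂ) ^ 2 * x) * ψ₂Ex (ζ : ℂ) x) atTop (nhds 1) ∧
    Tendsto (fun x : ℝ =>
        Complex.exp (-Complex.I * (ζ : ℂ) ^ 2 * x) * ψ₂Ex (ζ : ℂ) x) atBot
      (nhds (-2 * ((ζ : ℂ) ^ 2 - Complex.I) / ((ζ : ℂ) ^ 2 + 2 * Complex.I))) ∧
    -2 * ((ζ : ℂ) ^ 2 - Complex.I) / ((ζ : ℂ) ^ 2 + 2 * Complex.I)
      = 1 / (-(((ζ : ℂ) ^ 2 + 2 * Complex.I)) / (2 * ((ζ : ℂ) ^ 2 - Complex.I))) := by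
  have h0 := aux_lam ζ
  have hm : (ζ : ℂ) ^ 2 - Complex.I ≠ 0 := by
    have := aux_ne (ζ ^ 2) (-1) (by norm_num)
    intro h; apply this; rw [← h]; push_cast; ring
  have hexp : ∀ x : ℝ, Real.exp (2 * x) = (Real.exp (-(2 * x)))⁻¹ := by
    intro x; rw [← Real.exp_neg, neg_neg]
  refine ⟨?_, ?_, ?_, ?_, ?_⟩
  · simp only [aux_psi1]
    apply aux_bdd
    have := aux_comp (f := fun u : ℝ => -9 * ζ / (ζ ^ 2 + 2 * Complex.I) *
      ((u : ℂ) ^ 2 / (4 * (u : ℂ) ^ 3 - 3 * Complex.I))) (c := 0) aux_top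
      (by
        refine ContinuousAt.mul (by fun_prop) (ContinuousAt.div (by fun_prop) (by fun_prop) ?_)
        simp) (by simp)
    refine this.congr fun x => ?_
    have hu := (Real.exp_pos (-(2 * x))).ne'
    rw [hexp]
    generalize Real.exp (-(2 * x)) = u at *
    have hu' : (u : ℂ) ≠ 0 := by exact_mod_cast hu
    congr 1
    have h4 : (4 : ℂ) * (u : ℂ) ^ 3 - 3 * Complex.I ≠ 0 := by
      have := aux_ne (4 * u ^ 3) (-3) (by norm_num)
      intro h; apply this; rw [← h]; push_cast; ring
    have h5 : (4 : ℂ) - 3 * Complex.I * ((u⁻¹ : ℝ) : ℂ) ^ 3 =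
      (4 * (u : ℂ) ^ 3 - 3 * Complex.I) / (u : ℂ) ^ 3 := by
      push_cast; field_simp
    rw [h5]; push_cast
    field_simp
  · simp only [aux_psi1]
    apply aux_bdd
    refine aux_comp (f := fun u : ℝ => -9 * ζ / (ζ ^ 2 + 2 * Complex.I) *
      ((u : ℂ) / (4 - 3 * Complex.I * (u : ℂ) ^ 3))) (c := 0) aux_bot ?_ (by simp)
    refine ContinuousAt.mul (by fun_prop) (ContinuousAt.div (by fun_prop) (by fun_prop) ?_)
    simp
  · simp only [aux_psi2]
    have := aux_comp (f := fun u : ℝ => -(4 * (ζ ^ 2 - Complex.I) * (u : ℂ) ^ 3 - 3 * Complex.I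
      * (ζ ^ 2 + 2 * Complex.I)) /
      ((ζ ^ 2 + 2 * Complex.I) * (2 * (u : ℂ) ^ 3 + 3 * Complex.I))) (c := 1) aux_top
      (by
        refine ContinuousAt.div (by fun_prop) (by fun_prop) ?_
        simp [h0])
      (by
        have := Complex.I_ne_zero
        simp only [Complex.ofReal_zero]
        rw [div_eq_one_iff_eq (by simp [h0])]
        ring)
    refine this.congr fun x => ?_
    have hu := (Real.exp_pos (-(2 * x))).ne'
    rw [hexp]
    generalize Real.exp (-(2 * x)) = u at *
    have hu' : (u : ℂ) ≠ 0 := by exact_mod_cast hu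
    have hu3 : (u : ℂ) ^ 3 ≠ 0 := pow_ne_zero _ hu'
    symm
    rw [← mul_div_mul_right _ _ hu3]
    push_cast
    congr 1 <;> field_simp
  · simp only [aux_psi2]
    refine aux_comp (f := fun u : ℝ => -(4 * (ζ ^ 2 - Complex.I) - 3 * Complex.I * (u : ℂ) ^ 3
      * (ζ ^ 2 + 2 * Complex.I)) /
      ((ζ ^ 2 + 2 * Complex.I) * (2 + 3 * Complex.I * (u : ℂ) ^ 3))) aux_bot ?_ ?_
    · refine ContinuousAt.div (by fun_prop) (by fun_prop) ?_
      simp [h0]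
    · simp only [Complex.ofReal_zero]
      rw [div_eq_div_iff (by simpa using h0) h0]
      ring
  · field_simp
end
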